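/- arXiv:1006.4696 — 2 statements merged into one kernel-verified Lean document; each statement's English description precedes it below -/
import Mathlib

section
/- (Critical Alternating Path, lowest equilibrium) Let W be the lowest competitive equilibrium of a unit-demand market with supporting matching μ. Then for every buyer i there exists a tight alternating path starting at i (with a matching edge or of length 0) ending either at a good with price 0 or at an unmatched buyer. -/
attribute [local instance] Classical.propDecidable

/-- A unit-demand market: finite sets of buyers `I` and goods `J`, with utility
functions `u i j : ℝ → ℝ` that are continuous, strictly decreasing, surjective
(domain and range cover all of `ℝ`), and eventually non-positive. -/
structure Market (I J : Type) [Fintype I] [Fintype J] where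
  u : I → J → ℝ → ℝ
  cont : ∀ i j, Continuous (u i j)
  anti : ∀ i j, StrictAnti (u i j)
  surj : ∀ i j, Function.Surjective (u i j)
  evNonpos : ∀ i j, ∃ x : ℝ, ∀ y ≥ x, u i j y ≤ 0

/-- A competitive equilibrium: nonnegative prices `p`, nonnegative payoffs `w`,
and a partial matching `μ` (injective on matched buyers) such that every buyer
receives a most preferred good at the prices, unmatched buyers have payoff `0`,
and unmatched goods have price `0`. -/
def IsEquilib {I J : Type} [Fintype I] [Fintype J] (M : Market I J)
    (p : J → ℝ) (w : I → ℝ) (μ : I → Option J) : Prop :=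
  (∀ i i' j, μ i = some j → μ i' = some j → i = i') ∧
  (∀ j, 0 ≤ p j) ∧ (∀ i, 0 ≤ w i) ∧
  (∀ i j, μ i = some j → w i = M.u i j (p j)) ∧
  (∀ i j, M.u i j (p j) ≤ w i) ∧
  (∀ i, μ i = none → w i = 0) ∧
  (∀ j, (∀ i, μ i ≠ some j) → p j = 0)

/-- `W` is the lowest competitive equilibrium: its prices are componentwise
below those of every competitive equilibrium. -/
def IsLowest {I J : Type} [Fintype I] [Fintype J] (M : Market I J)
    (p : J → ℝ) (w : I → ℝ) (μ : I → Option J) : Prop :=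
  IsEquilib M p w μ ∧ ∀ p' w' μ', IsEquilib M p' w' μ' → ∀ j, p j ≤ p' j

/-- `W` is the highest competitive equilibrium: its prices are componentwise
above those of every competitive equilibrium. -/
def IsHighest {I J : Type} [Fintype I] [Fintype J] (M : Market I J)
    (p : J → ℝ) (w : I → ℝ) (μ : I → Option J) : Prop :=
  IsEquilib M p w μ ∧ ∀ p' w' μ', IsEquilib M p' w' μ' → ∀ j, p' j ≤ p j

/-- Induced payoff `u_i(p) = max({u_i^j(p^j) : j} ∪ {0})`. -/
noncomputable def inducedPayoff {I J : Type} [Fintype I] [Fintype J] (M : Market I J)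
    (p : J → ℝ) (i : I) : ℝ :=
  (insert (0:ℝ) (Finset.univ.image fun j => M.u i j (p j))).max' (Finset.insert_nonempty _ _)

/-- Induced price `p^j(u) = max({p_i^j(u_i) : i} ∪ {0})`, where `p_i^j` is the
inverse of `u_i^j`. -/
noncomputable def inducedPrice {I J : Type} [Fintype I] [Fintype J] (M : Market I J)
    (w : I → ℝ) (j : J) : ℝ :=
  (insert (0:ℝ) (Finset.univ.image fun i => Function.invFun (M.u i j) (w i))).max' (Finset.insert_nonempty _ _)

/-!
Let `S` be the set of buyers that tight alternating paths from `i` reach. If none of them is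
unmatched or holds a good of price `0`, then no buyer outside `S` has a tight edge to a good held in
`S`, so these prices can be lowered a little, to reserve prices `r`, without attracting outsiders.
Run an ascending auction of these goods among the buyers in `S`, starting from `r`. As there are as
many goods as buyers, some good receives its first bid only when the auction ends, hence is sold at
its reserve; letting the bid increment tend to `0` gives exact envy-freeness. The auction prices may
exceed the old ones on other goods, but the minimum of two envy-free price vectors is envy-free, and
lowering the prices to it gives an equilibrium below the lowest one, a contradiction.
-/

section Auction

variable {A B α : Type*} [LinearOrder α] {v : A → B → ℕ → α} {k : B → ℕ} {holder : B → Option A}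

/-- A state of the ascending auction in which buyer `i` values good `j` at price level `n` at
`v i j n`. Good `j` has received `k j` bids, the last one by `holder j`, who stands to pay level
`k j - 1`; the next bid on `j` is at level `k j`. -/
structure IsAuctionState (v : A → B → ℕ → α) (k : B → ℕ) (holder : B → Option A) : Prop where
  holder_inj : ∀ i j j', holder j = some i → holder j' = some i → j = j'
  holder_eq_none_iff : ∀ j, holder j = none ↔ k j = 0
  le_held : ∀ i j, holder j = some i → ∀ l, v i l (k l) ≤ v i j (k j - 1)
  exists_le_one : ∃ l, k l ≤ 1

namespace IsAuctionState

lemma initial [Nonempty B] : IsAuctionState v (fun _ => 0) (fun _ => none) where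
  holder_inj := by simp
  holder_eq_none_iff := by simp
  le_held := by simp
  exists_le_one := by simp

lemma bids_le {N : ℕ} (hs : IsAuctionState v k holder) (hv : ∀ i j, Antitone (v i j))
    (hN : ∀ i j l, v i j N < v i l 1) (j : B) : k j ≤ N := by
  rcases hj : holder j with _ | i
  · simp [(hs.holder_eq_none_iff j).1 hj]
  · obtain ⟨l, hl⟩ := hs.exists_le_one
    have hlt : v i j N < v i j (k j - 1) :=
      ((hN i j l).trans_le (hv i l hl)).trans_le (hs.le_held i j hj l)
    have := (hv i j).reflect_lt hlt
    omega

lemma exists_unsold [Finite A] (hs : IsAuctionState v k holder) (hcard : Nat.card A = Nat.card B)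
    {i : A} (hi : ∀ j, holder j ≠ some i) : ∃ f, k f = 0 := by
  by_contra! hk
  choose t ht using fun j => Option.ne_none_iff_exists'.1 (mt (hs.holder_eq_none_iff j).1 (hk j))
  have ht_inj : Function.Injective t := fun j j' h =>
    hs.holder_inj _ j j' (ht j) (h ▸ ht j')
  obtain ⟨j, rfl⟩ := (ht_inj.bijective_of_nat_card_le hcard.le).surjective i
  exact hi j (ht j)

/-- The idle buyer `i` bids on a good she likes best at the current prices. As the good `f` had not
been bid on, it still has at most one bid afterwards. -/
lemma exists_lt [Finite B] (hs : IsAuctionState v k holder) (hv : ∀ i j, Antitone (v i j))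
    {i : A} (hi : ∀ j, holder j ≠ some i) {f : B} (hf : k f = 0) :
    ∃ k' holder', IsAuctionState v k' holder' ∧ k < k' := by
  have : Nonempty B := ⟨f⟩
  obtain ⟨j, hj⟩ := Finite.exists_max fun l => v i l (k l)
  have hlt : k < Function.update k j (k j + 1) := lt_update_self_iff.2 (Nat.lt_succ_self _)
  refine ⟨_, Function.update holder j (some i), ⟨?_, ?_, ?_, ?_⟩, hlt⟩
  · intro a c c' hc hc'
    have := hs.holder_inj a c c'
    grind [Function.update_apply]
  · intro c
    rcases eq_or_ne c j with rfl | hcj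
    · simp
    · simpa [hcj] using hs.holder_eq_none_iff c
  · intro a c hc l
    refine (hv a l (hlt.le l)).trans ?_
    rcases eq_or_ne c j with rfl | hcj
    · obtain rfl : i = a := by simpa using hc
      simpa using hj l
    · simp only [Function.update_of_ne hcj] at hc ⊢
      exact hs.le_held a c hc l
  · refine ⟨f, ?_⟩
    rcases eq_or_ne f j with rfl | hfj <;> simp [*]

end IsAuctionState

/-- The auction reaches a state in which every buyer holds a good, and a good that was the last to
be bid on is then still at level `0`. -/
lemma exists_auction_outcome [Finite A] [Finite B] [Nonempty B] (hcard : Nat.card A = Nat.card B)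
    (hv : ∀ i j, Antitone (v i j)) {N : ℕ} (hN : ∀ i j l, v i j N < v i l 1) :
    ∃ (σ : A ≃ B) (n : B → ℕ), (∀ i j, v i j (n j + 1) ≤ v i (σ i) (n (σ i))) ∧ ∃ l, n l = 0 := by
  have hfin : {k | ∃ holder, IsAuctionState v k holder}.Finite :=
    (Set.Finite.pi' fun _ => Set.finite_Iic N).subset fun k ⟨_, hs⟩ j => hs.bids_le hv hN j
  obtain ⟨k, ⟨holder, hs⟩, hmax⟩ := hfin.exists_maximal ⟨_, _, IsAuctionState.initial⟩
  have hheld : ∀ i, ∃ j, holder j = some i := by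
    by_contra! ⟨i, hi⟩
    obtain ⟨f, hf⟩ := hs.exists_unsold hcard hi
    obtain ⟨k', holder', hs', hlt⟩ := hs.exists_lt hv hi hf
    exact hlt.not_ge (hmax ⟨holder', hs'⟩ hlt.le)
  choose t ht using hheld
  have ht_inj : Function.Injective t := fun a b hab =>
    Option.some_injective _ ((ht a).symm.trans (hab ▸ ht b))
  have ht_bij := ht_inj.bijective_of_nat_card_le hcard.ge
  have hpos : ∀ j, 1 ≤ k j := fun j => by
    obtain ⟨i, rfl⟩ := ht_bij.surjective j
    have := mt (hs.holder_eq_none_iff (t i)).2 (by simp [ht])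
    omega
  obtain ⟨l, hl⟩ := hs.exists_le_one
  refine ⟨Equiv.ofBijective t ht_bij, fun j => k j - 1, fun i j => ?_, l, Nat.sub_eq_zero_of_le hl⟩
  simpa [Nat.sub_add_cancel (hpos j)] using hs.le_held i (t i) (ht i) j

end Auction

section EnvyFree

open Filter Topology

variable {A B : Type*} {u : A → B → ℝ → ℝ}

/-- At prices `x`, every buyer `i` finds the good `σ i` at least as good as any other, where `u i j`
is her utility from `j` as a function of its price. -/
def EnvyFree (u : A → B → ℝ → ℝ) (x : B → ℝ) (σ : A ≃ B) : Prop :=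
  ∀ i j, u i j (x j) ≤ u i (σ i) (x (σ i))

lemma exists_almost_envyFree [Finite A] [Finite B] [Nonempty B] (hcard : Nat.card A = Nat.card B)
    (hanti : ∀ i j, Antitone (u i j)) {r : B → ℝ} {C : ℝ} (hC : ∀ i j l, u i j C < u i l (r l + 1))
    {δ : ℝ} (hδ : 0 < δ) (hδ1 : δ ≤ 1) :
    ∃ x ∈ Set.Icc r (fun _ => C), ∃ σ : A ≃ B,
      (∀ i j, u i j (x j + δ) ≤ u i (σ i) (x (σ i))) ∧ ∃ l, x l = r l := by
  obtain ⟨N, hN⟩ : ∃ N : ℕ, ∀ j, C ≤ r j + N * δ :=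
    (eventually_all.2 fun j => (tendsto_atTop_add_const_left _ (r j)
      (tendsto_natCast_atTop_atTop.atTop_mul_const hδ)).eventually_ge_atTop C).exists
  have hlevel : ∀ j, Monotone fun n : ℕ => r j + n * δ := fun j m n hmn => by
    dsimp only
    gcongr
  have hone : ∀ i l, u i l (r l + 1) ≤ u i l (r l + (1 : ℕ) * δ) := fun i l =>
    hanti i l (by simpa using hδ1)
  obtain ⟨σ, n, hn, l, hl⟩ := exists_auction_outcome (v := fun i j n => u i j (r j + n * δ)) hcard
    (fun i j => (hanti i j).comp_monotone (hlevel j))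
    (fun i j l => (hanti i j (hN j)).trans_lt ((hC i j l).trans_le (hone i l)))
  have happrox : ∀ i j, u i j (r j + n j * δ + δ) ≤ u i (σ i) (r (σ i) + n (σ i) * δ) :=
    fun i j => by simpa [add_mul, add_assoc] using hn i j
  refine ⟨fun j => r j + n j * δ, ⟨fun j => ?_, fun j => ?_⟩, σ, happrox, l, by simp [hl]⟩
  · simpa using (hlevel j) (Nat.zero_le (n j))
  · obtain ⟨i, rfl⟩ := σ.surjective j
    have hlt : u i (σ i) C < u i (σ i) (r (σ i) + n (σ i) * δ) :=
      calc u i (σ i) C < u i l (r l + 1) := hC i _ l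
        _ ≤ u i l (r l + n l * δ + δ) := by simpa [hl] using hone i l
        _ ≤ _ := happrox i l
    exact ((hanti i (σ i)).reflect_lt hlt).le

/-- The almost envy-free prices of a compact box form, together with their error `δ`, a compact set,
which meets `δ = 0` because it meets every `δ ∈ (0, 1]`. -/
theorem exists_envyFree_eq_reserve [Finite A] [Finite B] [Nonempty B]
    (hcard : Nat.card A = Nat.card B) (hcont : ∀ i j, Continuous (u i j))
    (hanti : ∀ i j, Antitone (u i j)) (hlim : ∀ i j, Tendsto (u i j) atTop atBot) (r : B → ℝ) :
    ∃ (x : B → ℝ) (σ : A ≃ B), EnvyFree u x σ ∧ r ≤ x ∧ ∃ l, x l = r l := by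
  obtain ⟨C, hC⟩ : ∃ C, ∀ i j l, u i j C < u i l (r l + 1) :=
    (eventually_all.2 fun i => eventually_all.2 fun j => eventually_all.2 fun l =>
      (hlim i j).eventually_lt_atBot _).exists
  let F : Set (ℝ × (B → ℝ)) := {q | ∃ σ : A ≃ B,
    (∀ i j, u i j (q.2 j + q.1) ≤ u i (σ i) (q.2 (σ i))) ∧ ∃ l, q.2 l = r l}
  have hF : IsClosed F := by
    simp only [F, Set.ofPred_exists, Set.ofPred_and, Set.ofPred_forall]
    exact isClosed_iUnion_of_finite fun σ =>
      (isClosed_iInter fun i => isClosed_iInter fun j =>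
        isClosed_le (by fun_prop) (by fun_prop)).inter
        (isClosed_iUnion_of_finite fun l => isClosed_eq (by fun_prop) (by fun_prop))
  let D : Set ℝ := Prod.fst '' (Set.Icc 0 1 ×ˢ Set.Icc r (fun _ => C) ∩ F)
  have hD : IsClosed D :=
    (((isCompact_Icc.prod isCompact_Icc).inter_right hF).image continuous_fst).isClosed
  have hsub : Set.Ioc 0 1 ⊆ D := fun δ hδ => by
    obtain ⟨x, hx, hxF⟩ := exists_almost_envyFree hcard hanti hC hδ.1 hδ.2
    exact ⟨(δ, x), ⟨⟨Set.Ioc_subset_Icc_self hδ, hx⟩, hxF⟩, rfl⟩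
  have hzero : (0 : ℝ) ∈ D := hD.closure_subset_iff.2 hsub (by simp [closure_Ioc])
  obtain ⟨⟨_, x⟩, ⟨⟨-, hx⟩, σ, hσ, hl⟩, rfl⟩ := hzero
  exact ⟨x, σ, fun i j => by simpa using hσ i j, hx.1, hl⟩

/-- Each buyer keeps the better of her two goods. -/
lemma EnvyFree.inf [Finite A] (hanti : ∀ i j, StrictAnti (u i j)) {x y : B → ℝ} {σ τ : A ≃ B}
    (hσ : EnvyFree u x σ) (hτ : EnvyFree u y τ) : ∃ ρ : A ≃ B, EnvyFree u (x ⊓ y) ρ := by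
  let better : A → Prop := fun i => u i (σ i) (x (σ i)) < u i (τ i) (y (τ i))
  let t : A → B := fun i => if better i then τ i else σ i
  have lt_of_better : ∀ i, better i → y (τ i) < x (τ i) := fun i hi =>
    (hanti i _).lt_iff_gt.1 ((hσ i (τ i)).trans_lt hi)
  have le_of_not_better : ∀ i, ¬ better i → x (σ i) ≤ y (σ i) := fun i hi =>
    (hanti i _).le_iff_ge.1 ((hτ i (σ i)).trans (not_lt.1 hi))
  have ht_inj : Function.Injective t := fun a b hab => by
    have := lt_of_better a
    have := lt_of_better b
    have := le_of_not_better a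
    have := le_of_not_better b
    have := σ.injective (a₁ := a) (a₂ := b)
    have := τ.injective (a₁ := a) (a₂ := b)
    grind
  have : Finite B := Finite.of_equiv A σ
  have ht_bij := ht_inj.bijective_of_nat_card_le (Nat.card_congr σ).ge
  refine ⟨Equiv.ofBijective t ht_bij, fun i j => ?_⟩
  calc u i j ((x ⊓ y) j) ≤ max (u i (σ i) (x (σ i))) (u i (τ i) (y (τ i))) := by
        rw [Pi.inf_apply]
        rcases min_choice (x j) (y j) with h | h <;> rw [h]
        · exact le_max_of_le_left (hσ i j)
        · exact le_max_of_le_right (hτ i j)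
    _ ≤ u i (t i) ((x ⊓ y) (t i)) := by
        by_cases hi : better i
        · simp only [t, if_pos hi, max_eq_right hi.le]
          exact (hanti i _).antitone inf_le_right
        · simp only [t, if_neg hi, max_eq_left (not_lt.1 hi)]
          exact (hanti i _).antitone inf_le_left

end EnvyFree

section Matching

variable {I J A : Type*} {μ : I → Option J} {e : A → I} {g : A → J}

lemma injective_of_matched (hμ : ∀ i i' j, μ i = some j → μ i' = some j → i = i')
    (he : Function.Injective e) (hg : ∀ a, μ (e a) = some (g a)) : Function.Injective g :=
  fun a b hab => he (hμ _ _ (g a) (hg a) (hab ▸ hg b))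

lemma reassign_inj (hμ : ∀ i i' j, μ i = some j → μ i' = some j → i = i')
    (he : Function.Injective e) (hg : ∀ a, μ (e a) = some (g a)) (τ : A ≃ A) {i i' : I} {j : J}
    (hi : Function.extend e (fun a => some (g (τ a))) μ i = some j)
    (hi' : Function.extend e (fun a => some (g (τ a))) μ i' = some j) : i = i' := by
  have hout : ∀ l, (¬ ∃ a, e a = l) → ∀ b, μ l ≠ some (g b) := fun l hl b hlb =>
    hl ⟨b, hμ _ _ _ (hg b) hlb⟩
  by_cases hie : ∃ a, e a = i <;> by_cases hie' : ∃ a, e a = i'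
  · obtain ⟨⟨a, rfl⟩, b, rfl⟩ := And.intro hie hie'
    rw [he.extend_apply] at hi hi'
    have hgτ : g (τ a) = g (τ b) := Option.some_injective _ (hi.trans hi'.symm)
    exact congrArg e (τ.injective (injective_of_matched hμ he hg hgτ))
  · obtain ⟨a, rfl⟩ := hie
    rw [he.extend_apply] at hi
    rw [Function.extend_apply' _ _ _ hie'] at hi'
    exact absurd (hi'.trans hi.symm) (hout _ hie' _)
  · obtain ⟨a, rfl⟩ := hie'
    rw [he.extend_apply] at hi'
    rw [Function.extend_apply' _ _ _ hie] at hi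
    exact absurd (hi.trans hi'.symm) (hout _ hie _)
  · rw [Function.extend_apply' _ _ _ hie] at hi
    rw [Function.extend_apply' _ _ _ hie'] at hi'
    exact hμ _ _ _ hi hi'

lemma unmatched_of_reassign_unmatched (he : Function.Injective e)
    (hg : ∀ a, μ (e a) = some (g a)) (τ : A ≃ A) {j : J}
    (hj : ∀ i, Function.extend e (fun a => some (g (τ a))) μ i ≠ some j) (i : I) :
    μ i ≠ some j := by
  by_cases hie : ∃ a, e a = i
  · obtain ⟨a, rfl⟩ := hie
    have := hj (e (τ.symm a))
    rwa [he.extend_apply, Equiv.apply_symm_apply, ← hg a] at this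
  · have := hj i
    rwa [Function.extend_apply' _ _ _ hie] at this

end Matching

section Market

open Filter Topology

variable {I J : Type} [Fintype I] [Fintype J] {M : Market I J}
  {p : J → ℝ} {w : I → ℝ} {μ : I → Option J}

lemma Market.tendsto_atBot (M : Market I J) (i : I) (j : J) : Tendsto (M.u i j) atTop atBot :=
  tendsto_atTop_atBot_of_antitone (M.anti i j).antitone fun c =>
    (M.surj i j c).imp fun _ => le_of_eq

/-- Two consecutive edges of a tight alternating path: the matching edge from buyer `a` to her good,
then a tight edge from this good to buyer `b`. -/
def TightStep (M : Market I J) (p : J → ℝ) (w : I → ℝ) (μ : I → Option J) (a b : I) : Prop :=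
  ∃ j, μ a = some j ∧ w b = M.u b j (p j)

lemma Market.exists_reserve (M : Market I J) {S : Set I} {j : J} {q : ℝ} (hq : 0 < q)
    (hS : ∀ i ∉ S, M.u i j q < w i) : ∃ r, 0 ≤ r ∧ r < q ∧ ∀ i ∉ S, M.u i j r ≤ w i := by
  have hslack : ∀ᶠ r in 𝓝[<] q, ∀ i, i ∉ S → M.u i j r ≤ w i := by
    refine nhdsWithin_le_nhds (eventually_all.2 fun i => eventually_imp_distrib_left.2 fun hi => ?_)
    exact ((M.cont i j).continuousAt.eventually_lt_const (hS i hi)).mono fun _ => le_of_lt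
  obtain ⟨r, hr, hr0, hrq⟩ := (hslack.and (Ico_mem_nhdsLT hq)).exists
  exact ⟨r, hr0, hrq, hr⟩

section Reprice

variable {A : Type*} {e : A → I} {g : A → J} {x : A → ℝ} {τ : A ≃ A}

lemma IsEquilib.payoff_le_reprice (h : IsEquilib M p w μ) (he : Function.Injective e)
    (hg : ∀ a, μ (e a) = some (g a)) (hxp : x ≤ p ∘ g)
    (hτ : EnvyFree (fun a b => M.u (e a) (g b)) x τ) (i : I) :
    w i ≤ Function.extend e (fun a => M.u (e a) (g (τ a)) (x (τ a))) w i := by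
  obtain ⟨-, -, -, hmatch, -, -, -⟩ := h
  by_cases hie : ∃ a, e a = i
  · obtain ⟨a, rfl⟩ := hie
    rw [he.extend_apply]
    calc w (e a) = M.u (e a) (g a) (p (g a)) := hmatch _ _ (hg a)
      _ ≤ M.u (e a) (g a) (x a) := (M.anti _ _).antitone (hxp a)
      _ ≤ M.u (e a) (g (τ a)) (x (τ a)) := hτ a a
  · rw [Function.extend_apply' _ _ _ hie]

lemma IsEquilib.utility_le_reprice (h : IsEquilib M p w μ) (he : Function.Injective e)
    (hg : ∀ a, μ (e a) = some (g a)) (hxp : x ≤ p ∘ g)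
    (hτ : EnvyFree (fun a b => M.u (e a) (g b)) x τ)
    (hout : ∀ i ∉ Set.range e, ∀ b, M.u i (g b) (x b) ≤ w i) (i : I) (j : J) :
    M.u i j (Function.extend g x p j) ≤
      Function.extend e (fun a => M.u (e a) (g (τ a)) (x (τ a))) w i := by
  have hw_le := h.payoff_le_reprice he hg hxp hτ i
  obtain ⟨hinj, -, -, -, hstab, -, -⟩ := h
  by_cases hj : ∃ b, g b = j
  · obtain ⟨b, rfl⟩ := hj
    rw [(injective_of_matched hinj he hg).extend_apply]
    by_cases hie : ∃ a, e a = i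
    · obtain ⟨a, rfl⟩ := hie
      rw [he.extend_apply]
      exact hτ a b
    · rw [Function.extend_apply' _ _ _ hie]
      exact hout i hie b
  · rw [Function.extend_apply' _ _ _ hj]
    exact (hstab i j).trans hw_le

lemma IsEquilib.reprice (h : IsEquilib M p w μ) (he : Function.Injective e)
    (hg : ∀ a, μ (e a) = some (g a)) (hx : 0 ≤ x) (hxp : x ≤ p ∘ g)
    (hτ : EnvyFree (fun a b => M.u (e a) (g b)) x τ)
    (hout : ∀ i ∉ Set.range e, ∀ b, M.u i (g b) (x b) ≤ w i) :
    IsEquilib M (Function.extend g x p)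
      (Function.extend e (fun a => M.u (e a) (g (τ a)) (x (τ a))) w)
      (Function.extend e (fun a => some (g (τ a))) μ) := by
  have hw_le := h.payoff_le_reprice he hg hxp hτ
  have hstab' := h.utility_le_reprice he hg hxp hτ hout
  obtain ⟨hinj, hp, hw, hmatch, -, hnone, hunm⟩ := h
  have hg_inj := injective_of_matched hinj he hg
  refine ⟨fun i i' j => reassign_inj hinj he hg τ, fun j => ?_, fun i => (hw i).trans (hw_le i),
    fun i j hi => ?_, hstab', fun i hi => ?_, fun j hj => ?_⟩
  · by_cases hj : ∃ b, g b = j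
    · obtain ⟨b, rfl⟩ := hj
      exact hg_inj.extend_apply x p b ▸ hx b
    · exact Function.extend_apply' x p j hj ▸ hp j
  · by_cases hie : ∃ a, e a = i
    · obtain ⟨a, rfl⟩ := hie
      rw [he.extend_apply, Option.some_inj] at hi
      rw [← hi, he.extend_apply, hg_inj.extend_apply]
    · rw [Function.extend_apply' _ _ _ hie] at hi ⊢
      have hj : ¬ ∃ b, g b = j := fun ⟨b, hb⟩ => hie ⟨b, hinj _ _ _ (hg b) (hb ▸ hi)⟩
      rw [Function.extend_apply' _ _ _ hj]
      exact hmatch i j hi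
  · by_cases hie : ∃ a, e a = i
    · obtain ⟨a, rfl⟩ := hie
      rw [he.extend_apply] at hi
      exact absurd hi (Option.some_ne_none _)
    · rw [Function.extend_apply' _ _ _ hie] at hi ⊢
      exact hnone i hi
  · have hj_old := unmatched_of_reassign_unmatched he hg τ hj
    rw [Function.extend_apply' _ _ _ fun ⟨b, hb⟩ => hj_old (e b) (hb ▸ hg b)]
    exact hunm j hj_old

end Reprice

lemma IsEquilib.exists_lt (h : IsEquilib M p w μ) {S : Set I} (hS : S.Nonempty) {g : S → J}
    (hg : ∀ a : S, μ a = some (g a)) (hpos : ∀ a, 0 < p (g a))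
    (hclosed : ∀ i ∉ S, ∀ a, w i ≠ M.u i (g a) (p (g a))) :
    ∃ p' w' μ', IsEquilib M p' w' μ' ∧ p' < p := by
  have : Nonempty S := hS.to_subtype
  have ⟨hinj, _, _, hmatch, hstab, _, _⟩ := h
  have hg_inj := injective_of_matched hinj Subtype.val_injective hg
  choose r hr0 hrp hrout using fun a => M.exists_reserve (hpos a) fun i hi =>
    (hstab i (g a)).lt_of_ne (hclosed i hi a).symm
  let u : S → S → ℝ → ℝ := fun a b => M.u a (g b)
  have hcurrent : EnvyFree u (p ∘ g) (Equiv.refl S) := fun a b =>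
    (hstab a (g b)).trans (hmatch a (g a) (hg a)).le
  obtain ⟨x, σ, hσ, hrx, l, hl⟩ := exists_envyFree_eq_reserve (u := u) rfl
    (fun _ _ => M.cont _ _) (fun _ _ => (M.anti _ _).antitone) (fun _ _ => M.tendsto_atBot _ _) r
  obtain ⟨ρ, hρ⟩ := hσ.inf (fun _ _ => M.anti _ _) hcurrent
  have hr_le : r ≤ x ⊓ p ∘ g := le_inf hrx fun a => (hrp a).le
  refine ⟨_, _, _, h.reprice Subtype.val_injective hg (le_trans hr0 hr_le) inf_le_right hρ ?_,
    Pi.lt_def.2 ⟨fun j => ?_, g l, ?_⟩⟩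
  · intro i hi b
    exact ((M.anti i (g b)).antitone (hr_le b)).trans (hrout b i (by simpa using hi))
  · by_cases hj : ∃ b, g b = j
    · obtain ⟨b, rfl⟩ := hj
      rw [hg_inj.extend_apply]
      exact inf_le_right
    · rw [Function.extend_apply' _ _ _ hj]
  · rw [hg_inj.extend_apply]
    exact inf_le_left.trans_lt (hl ▸ hrp l)

/-- The Tightness lemma, for the set of goods held by the buyers in `S`. -/
lemma IsLowest.exists_tightStep (h : IsLowest M p w μ) {S : Set I} (hS : S.Nonempty)
    (hpos : ∀ a ∈ S, ∃ j, μ a = some j ∧ 0 < p j) :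
    ∃ a ∈ S, ∃ b ∉ S, TightStep M p w μ a b := by
  by_contra! hclosed
  choose g hg hgpos using fun a : S => hpos a a.2
  obtain ⟨p', w', μ', h', hlt⟩ := h.1.exists_lt hS hg hgpos
    fun b hb a hba => hclosed a a.2 b hb ⟨g a, hg a, hba⟩
  exact hlt.not_ge (h.2 p' w' μ' h')

lemma IsLowest.exists_reflTransGen_tightStep (h : IsLowest M p w μ) (i : I) :
    ∃ e, Relation.ReflTransGen (TightStep M p w μ) i e ∧
      (μ e = none ∨ ∃ j, μ e = some j ∧ p j = 0) := by
  by_contra! hcon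
  obtain ⟨a, ha, b, hb, hab⟩ := h.exists_tightStep
    (S := {e | Relation.ReflTransGen (TightStep M p w μ) i e}) ⟨i, .refl⟩ fun a ha => by
      obtain ⟨hmatched, hne⟩ := hcon a ha
      obtain ⟨j, hj⟩ := Option.ne_none_iff_exists'.1 hmatched
      exact ⟨j, hj, (h.1.2.1 j).lt_of_ne (hne j hj).symm⟩
  exact hb (ha.tail hab)

end Market

/-- A chain that returns to a point already visited is cut off there. -/
lemma exists_injective_chain_of_reflTransGen {α : Type*} {R : α → α → Prop} {a e : α}
    (h : Relation.ReflTransGen R a e) :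
    ∃ (m : ℕ) (b : Fin (m + 1) → α), b 0 = a ∧ b (Fin.last m) = e ∧ Function.Injective b ∧
      ∀ k : Fin m, R (b k.castSucc) (b k.succ) := by
  induction h with
  | refl =>
    exact ⟨0, fun _ => a, rfl, rfl, fun _ _ _ => Subsingleton.elim (α := Fin 1) _ _,
      fun k => k.elim0⟩
  | @tail c d _ hcd ih =>
    obtain ⟨m, b, hb0, hbm, hinj, hstep⟩ := ih
    by_cases hd : d ∈ Set.range b
    · obtain ⟨⟨k, hk⟩, rfl⟩ := hd
      exact ⟨k, b ∘ Fin.castLE hk, hb0, rfl, hinj.comp (Fin.castLE_injective _),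
        fun l => hstep (l.castLE (Nat.le_of_lt_succ hk))⟩
    · refine ⟨m + 1, Fin.snoc b d, ?_, Fin.snoc_last _ _, Fin.snoc_injective_iff.2 ⟨hinj, hd⟩,
        Fin.lastCases ?_ fun k => ?_⟩
      · rw [← Fin.castSucc_zero, Fin.snoc_castSucc, hb0]
      · simpa [hbm] using hcd
      · simpa only [Fin.succ_castSucc, Fin.snoc_castSucc] using hstep k

/-- Critical alternating path at the lowest equilibrium: for every buyer `i`
there is a tight alternating path (starting at `i` with a matching edge, or of
length 0) ending at an unmatched buyer or at a good with price `0`. -/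
theorem critical_path_lowest {I J : Type} [Fintype I] [Fintype J] (M : Market I J)
    (p : J → ℝ) (w : I → ℝ) (μ : I → Option J) (h : IsLowest M p w μ) (i : I) :
    -- either a path i = b 0, g 0, b 1, g 1, ..., b m with `b m` unmatched
    (∃ (m : ℕ) (b : Fin (m+1) → I) (g : Fin m → J),
      b 0 = i ∧ Function.Injective b ∧ Function.Injective g ∧
      (∀ k : Fin m, μ (b k.castSucc) = some (g k)) ∧
      (∀ k : Fin m, w (b k.succ) = M.u (b k.succ) (g k) (p (g k))) ∧
      μ (b (Fin.last m)) = none) ∨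
    -- or a path i = b 0, g 0, b 1, g 1, ..., b m, g m with `p (g m) = 0`
    (∃ (m : ℕ) (b : Fin (m+1) → I) (g : Fin (m+1) → J),
      b 0 = i ∧ Function.Injective b ∧ Function.Injective g ∧
      (∀ k : Fin (m+1), μ (b k) = some (g k)) ∧
      (∀ k : Fin m, w (b k.succ) = M.u (b k.succ) (g k.castSucc) (p (g k.castSucc))) ∧
      p (g (Fin.last m)) = 0) := by
  obtain ⟨e, hreach, hend⟩ := h.exists_reflTransGen_tightStep i
  obtain ⟨m, b, hb0, hbm, hb_inj, hstep⟩ := exists_injective_chain_of_reflTransGen hreach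
  rcases hend with hnone | ⟨j, hej, hpj⟩
  · choose g hg htight using hstep
    exact Or.inl ⟨m, b, g, hb0, hb_inj,
      injective_of_matched h.1.1 (hb_inj.comp (Fin.castSucc_injective m)) hg, hg, htight,
      hbm ▸ hnone⟩
  · have hmatched : ∀ k, ∃ j, μ (b k) = some j :=
      Fin.lastCases ⟨j, hbm ▸ hej⟩ fun k => (hstep k).imp fun _ => And.left
    choose g hg using hmatched
    refine Or.inr ⟨m, b, g, hb0, hb_inj, injective_of_matched h.1.1 hb_inj hg, hg, fun k => ?_, ?_⟩
    · obtain ⟨j', hj', htight⟩ := hstep k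
      rwa [Option.some_injective _ (hj'.symm.trans (hg k.castSucc))] at htight
    · rwa [Option.some_injective _ ((hg (Fin.last m)).symm.trans (hbm ▸ hej))]
end

section
/- (Inductive characterization of the lowest-equilibrium payoff) Let M be a unit-demand market, i a buyer, and let W̄_{-i} denote the highest competitive equilibrium of the market M_{-i} obtained by removing buyer i. Then the payoff of buyer i at the lowest competitive equilibrium of M equals her best achievable payoff at the prices of W̄_{-i}: u_i(W_low) = max({u_i^j(p^j(W̄_{-i})) : j ∈ J} ∪ {0}). -/
attribute [local instance] Classical.propDecidable

/-- The market with buyer `i0` removed. -/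
def Market.removeBuyer {I J : Type} [Fintype I] [Fintype J] [DecidableEq I]
    (M : Market I J) (i0 : I) : Market {i : I // i ≠ i0} J where
  u := fun i j => M.u i.1 j
  cont := fun i j => M.cont i.1 j
  anti := fun i j => M.anti i.1 j
  surj := fun i j => M.surj i.1 j
  evNonpos := fun i j => M.evNonpos i.1 j

/-- The market with good `j0` removed. -/
def Market.removeGood {I J : Type} [Fintype I] [Fintype J] [DecidableEq J]
    (M : Market I J) (j0 : J) : Market I {j : J // j ≠ j0} where
  u := fun i j => M.u i j.1
  cont := fun i j => M.cont i j.1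
  anti := fun i j => M.anti i j.1
  surj := fun i j => M.surj i j.1
  evNonpos := fun i j => M.evNonpos i j.1

/- Allow every good `j` a reserve price `r j`, at which it stays when unsold. Two facts about
equilibria with reserve prices carry the proof. They exist, as limits of ascending auctions with
vanishing bid increments. And if `(p, μ)` and `(q, ν)` have reserves `r ≤ r'`, then `μ` and `ν` both
match the buyers who are better off in the second bijectively with the goods that are cheaper in
the second; hence switching just these buyers from `μ` to `ν` gives an equilibrium at prices
`p ⊓ q` with reserves `r`.

Write `p` for the lowest prices of `M` and `q` for the highest prices of `M` without `i0`. If `i0`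
buys `s` in `M`, then without `i0` the prices `p` form an equilibrium in which `s` is unsold at the
reserve `p s`, so `s` cannot be cheaper at `p` than at `q`, and `i0` gets at most `u_{i0}(q)`.
Conversely, for `0 ≤ v < u_{i0}(q)`, take as reserve of every good the price at which `i0` gets `v`,
or `0` if that is negative, and an equilibrium without `i0`. Maximality of `q` forces some good to
be unsold at a price giving `i0` exactly `v`. Handing it to `i0` gives an equilibrium of `M` with
reserves, whose meet with the lowest equilibrium is an equilibrium of `M`; minimality of `p` then
gives `i0` at least `v` there. -/

open Set Function

lemma inducedPayoff_le_iff {I J : Type} [Fintype I] [Fintype J] {M : Market I J} {p : J → ℝ}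
    {i : I} {a : ℝ} : inducedPayoff M p i ≤ a ↔ 0 ≤ a ∧ ∀ j, M.u i j (p j) ≤ a := by
  simp [inducedPayoff, Finset.max'_le_iff]

/-- Partial matchings of buyers with goods, encoded as in `IsEquilib`: `μ i` is the good bought by
`i`, if any, and no good is bought twice. -/
def IsMatching {I J : Type*} (μ : I → Option J) : Prop :=
  ∀ ⦃i i' j⦄, μ i = some j → μ i' = some j → i = i'

/-- The reassignment of good `j` to buyer `i`, whose previous owner is left unmatched. -/
noncomputable def assign {I J : Type*} (μ : I → Option J) (i : I) (j : J) : I → Option J :=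
  fun k => if k = i then some j else if μ k = some j then none else μ k

lemma assign_eq_some_iff {I J : Type*} {μ : I → Option J} {i k : I} {j l : J} :
    assign μ i j k = some l ↔ k = i ∧ l = j ∨ k ≠ i ∧ l ≠ j ∧ μ k = some l := by
  unfold assign
  grind

lemma IsMatching.assign {I J : Type*} {μ : I → Option J} (h : IsMatching μ) (i : I) (j : J) :
    IsMatching (assign μ i j) := by
  intro k k' l hk hk'
  rw [assign_eq_some_iff] at hk hk'
  grind [IsMatching]

/-- The extension of a matching of the buyers other than `i0` in which `i0` buys `s`. -/
def extendMatching {I J : Type*} [DecidableEq I] {i0 : I} (κ : {i : I // i ≠ i0} → Option J)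
    (s : J) (i : I) : Option J :=
  if hi : i = i0 then some s else κ ⟨i, hi⟩

section ExtendMatching

variable {I J : Type*} [DecidableEq I] {i0 : I} {κ : {i : I // i ≠ i0} → Option J} {s : J}

lemma extendMatching_self : extendMatching κ s i0 = some s :=
  dif_pos rfl

lemma extendMatching_coe (i : {i : I // i ≠ i0}) : extendMatching κ s i = κ i :=
  dif_neg i.2

lemma IsMatching.extendMatching (h : IsMatching κ) (hs : ∀ i, κ i ≠ some s) :
    IsMatching (extendMatching κ s) := by
  intro i i' j hi hi'
  unfold _root_.extendMatching at hi hi'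
  grind [IsMatching]

end ExtendMatching

lemma surjOn_and_mapsTo_of_injOn_of_surjOn {α β : Type*} {s : Set α} (hs : s.Finite)
    {t : Set β} {f g : α → β} (hf : MapsTo f s t) (hinj : InjOn f s) (hg : SurjOn g s t) :
    SurjOn f s t ∧ MapsTo g s t := by
  have hfg : f '' s = g '' s := eq_of_subset_of_ncard_le (hf.image_subset.trans hg)
    ((ncard_image_le hs).trans hinj.ncard_image.ge) (hs.image g)
  exact ⟨hg.trans hfg.ge, mapsTo_iff_image_subset.2 (hfg ▸ hf.image_subset)⟩

namespace Market

variable {I J : Type} [Fintype I] [Fintype J] {M : Market I J} {r r' p q : J → ℝ} {δ : ℝ}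
  {μ ν : I → Option J} {i : I} {j : J}

/-- The payoff of buyer `i` from buying `μ i` at prices `p`, which is `0` if `i` is unmatched. -/
noncomputable def payoff (M : Market I J) (p : J → ℝ) (μ : I → Option J) (i : I) : ℝ :=
  (μ i).elim 0 fun j => M.u i j (p j)

lemma payoff_of_eq_none (h : μ i = none) : M.payoff p μ i = 0 := by
  simp [payoff, h]

lemma payoff_of_eq_some (h : μ i = some j) : M.payoff p μ i = M.u i j (p j) := by
  simp [payoff, h]

lemma continuous_payoff (M : Market I J) (μ : I → Option J) (i : I) :
    Continuous fun p => M.payoff p μ i := by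
  rcases hi : μ i with _ | j
  · simpa only [payoff_of_eq_none hi] using continuous_const
  · simp only [payoff_of_eq_some hi]
    exact (M.cont i j).comp (continuous_apply j)

/-- Feasible, individually rational outcomes with reserve prices `r`: no good is sold below its
reserve price, unsold goods are priced at it, and no buyer makes a loss. -/
structure IsFeasible (M : Market I J) (r p : J → ℝ) (μ : I → Option J) : Prop where
  isMatching : IsMatching μ
  reserve_le : r ≤ p
  payoff_nonneg : ∀ i, 0 ≤ M.payoff p μ i
  price_eq_of_unsold : ∀ j, (∀ i, μ i ≠ some j) → p j = r j

/-- Competitive equilibria with reserve prices `r`. The payoffs are not part of the data: they are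
given by `Market.payoff`. -/
structure IsReserveEquilib (M : Market I J) (r p : J → ℝ) (μ : I → Option J) : Prop
    extends M.IsFeasible r p μ where
  le_payoff : ∀ i j, M.u i j (p j) ≤ M.payoff p μ i

lemma isEquilib_iff_isReserveEquilib_zero {w : I → ℝ} :
    IsEquilib M p w μ ↔ M.IsReserveEquilib 0 p μ ∧ w = M.payoff p μ := by
  constructor
  · rintro ⟨hμ, hp, hw, hsome, hle, hnone, hunsold⟩
    obtain rfl : w = M.payoff p μ := by
      funext i
      rcases hi : μ i with _ | j
      · rw [hnone i hi, payoff_of_eq_none hi]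
      · rw [hsome i j hi, payoff_of_eq_some hi]
    exact ⟨⟨⟨hμ, hp, hw, hunsold⟩, hle⟩, rfl⟩
  · rintro ⟨⟨⟨hμ, hp, hw, hunsold⟩, hle⟩, rfl⟩
    exact ⟨hμ, hp, hw, fun i j => payoff_of_eq_some, hle, fun i => payoff_of_eq_none, hunsold⟩

section Existence

/-- `δ`-approximate equilibria with reserve prices `r`: no buyer wants to bid an increment `δ` above
the current price of any good. -/
structure IsApproxEquilib (M : Market I J) (r : J → ℝ) (δ : ℝ) (p : J → ℝ) (μ : I → Option J) : Prop
    extends M.IsFeasible r p μ where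
  le_payoff : ∀ i j, M.u i j (p j + δ) ≤ M.payoff p μ i

/-- States of the ascending auction with increment `δ` and reserve prices `r`: the buyers currently
holding a good do not want to bid, but those without a good may. -/
structure IsAuctionState (M : Market I J) (r : J → ℝ) (δ : ℝ) (p : J → ℝ) (μ : I → Option J) : Prop
    extends M.IsFeasible r p μ where
  le_payoff_of_matched : ∀ i, μ i ≠ none → ∀ j, M.u i j (p j + δ) ≤ M.payoff p μ i

lemma bddAbove_isFeasible (M : Market I J) (r : J → ℝ) :
    BddAbove {p | ∃ μ, M.IsFeasible r p μ} := by
  choose z hz using fun i j => M.surj i j 0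
  choose B hB using fun j => ((finite_range fun i => z i j).insert (r j)).bddAbove
  refine ⟨B, fun p ⟨μ, h⟩ j => ?_⟩
  by_cases hj : ∀ i, μ i ≠ some j
  · exact (h.price_eq_of_unsold j hj).trans_le (hB j (mem_insert _ _))
  · push Not at hj
    obtain ⟨i, hi⟩ := hj
    have hpz : p j ≤ z i j := by
      rw [← (M.anti i j).le_iff_ge, hz, ← payoff_of_eq_some hi]
      exact h.payoff_nonneg i
    exact hpz.trans (hB j (mem_insert_of_mem _ (mem_range_self i)))

lemma isAuctionState_reserve (M : Market I J) (r : J → ℝ) (δ : ℝ) :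
    M.IsAuctionState r δ r fun _ => none where
  isMatching := by simp [IsMatching]
  reserve_le := le_rfl
  payoff_nonneg i := (payoff_of_eq_none rfl).ge
  price_eq_of_unsold _ _ := rfl
  le_payoff_of_matched _ h := absurd rfl h

lemma IsAuctionState.bid (h : M.IsAuctionState r δ p μ) (hδ : 0 ≤ δ) (hi : μ i = none)
    (hpos : 0 ≤ M.u i j (p j + δ)) (hmax : ∀ l, M.u i l (p l + δ) ≤ M.u i j (p j + δ)) :
    M.IsAuctionState r δ (update p j (p j + δ)) (assign μ i j) := by
  have hp : p ≤ update p j (p j + δ) := le_update_self_iff.2 (le_add_of_nonneg_right hδ)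
  have hpayoff : ∀ {k l}, assign μ i j k = some l →
      M.payoff (update p j (p j + δ)) (assign μ i j) k = M.u i j (p j + δ) ∧ k = i ∨
      M.payoff (update p j (p j + δ)) (assign μ i j) k = M.payoff p μ k ∧ μ k = some l := by
    intro k l hkl
    rw [payoff_of_eq_some hkl]
    obtain ⟨rfl, rfl⟩ | ⟨-, hl, hk⟩ := assign_eq_some_iff.1 hkl
    · simp
    · simp [update_of_ne hl, payoff_of_eq_some hk, hk]
  refine ⟨⟨h.isMatching.assign i j, h.reserve_le.trans hp, fun k => ?_, fun l hl => ?_⟩,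
    fun k hk l => ?_⟩
  · rcases hk : assign μ i j k with _ | l
    · exact (payoff_of_eq_none hk).ge
    · obtain ⟨hk, -⟩ | ⟨hk, -⟩ := hpayoff hk
      · exact hk ▸ hpos
      · exact hk ▸ h.payoff_nonneg k
  · have hlj : l ≠ j := fun hlj => hl i (assign_eq_some_iff.2 (.inl ⟨rfl, hlj⟩))
    rw [update_of_ne hlj]
    refine h.price_eq_of_unsold l fun k hk => hl k (assign_eq_some_iff.2 (.inr ⟨?_, hlj, hk⟩))
    rintro rfl
    simp [hi] at hk
  · have hle : M.u k l (update p j (p j + δ) l + δ) ≤ M.u k l (p l + δ) :=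
      (M.anti k l).antitone (by gcongr; exact hp l)
    obtain ⟨l', hk⟩ := Option.ne_none_iff_exists'.1 hk
    obtain ⟨hk, rfl⟩ | ⟨hk, hμk⟩ := hpayoff hk
    · exact hk ▸ hle.trans (hmax l)
    · exact hk ▸ hle.trans (h.le_payoff_of_matched k (by simp [hμk]) l)

lemma IsAuctionState.exists_sum_eq_add (h : M.IsAuctionState r δ p μ) (hδ : 0 ≤ δ)
    (hp : ¬ M.IsApproxEquilib r δ p μ) :
    ∃ p' μ', M.IsAuctionState r δ p' μ' ∧ ∑ j, p' j = ∑ j, p j + δ := by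
  obtain ⟨i, j₀, hlt⟩ : ∃ i j, M.payoff p μ i < M.u i j (p j + δ) := by
    by_contra! hle
    exact hp ⟨h.toIsFeasible, hle⟩
  have hi : μ i = none := by
    by_contra hi
    exact (h.le_payoff_of_matched i hi j₀).not_gt hlt
  obtain ⟨j, -, hmax⟩ := Finset.exists_max_image Finset.univ (fun j => M.u i j (p j + δ))
    ⟨j₀, Finset.mem_univ _⟩
  have hpos : 0 ≤ M.u i j (p j + δ) :=
    (h.payoff_nonneg i).trans (hlt.le.trans (hmax j₀ (Finset.mem_univ _)))
  refine ⟨_, _, h.bid hδ hi hpos fun l => hmax l (Finset.mem_univ _), ?_⟩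
  rw [Finset.sum_update_of_mem (Finset.mem_univ j), Finset.sdiff_singleton_eq_erase,
    ← Finset.add_sum_erase Finset.univ p (Finset.mem_univ j)]
  ring

lemma exists_isApproxEquilib (M : Market I J) (r : J → ℝ) (hδ : 0 < δ) :
    ∃ p μ, M.IsApproxEquilib r δ p μ := by
  by_contra! hnone
  have hgrow : ∀ n : ℕ, ∃ p μ, M.IsAuctionState r δ p μ ∧ ∑ j, p j = ∑ j, r j + n * δ := by
    intro n
    induction n with
    | zero => exact ⟨r, _, M.isAuctionState_reserve r δ, by simp⟩
    | succ n ih =>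
      obtain ⟨p, μ, h, hsum⟩ := ih
      obtain ⟨p', μ', h', hsum'⟩ := h.exists_sum_eq_add hδ.le (hnone p μ)
      exact ⟨p', μ', h', by rw [hsum', hsum]; push_cast; ring⟩
  obtain ⟨B, hB⟩ := M.bddAbove_isFeasible r
  obtain ⟨n, hn⟩ := Archimedean.arch (∑ j, B j - ∑ j, r j + δ) hδ
  obtain ⟨p, μ, h, hsum⟩ := hgrow n
  have hpB : ∑ j, p j ≤ ∑ j, B j := Finset.sum_le_sum fun j _ => hB ⟨μ, h.toIsFeasible⟩ j
  rw [nsmul_eq_mul] at hn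
  linarith

lemma isClosed_setOf_isApproxEquilib (M : Market I J) (r : J → ℝ) (μ : I → Option J) :
    IsClosed {x : ℝ × (J → ℝ) | M.IsApproxEquilib r x.1 x.2 μ} := by
  have hpayoff (i : I) : Continuous fun x : ℝ × (J → ℝ) => M.payoff x.2 μ i :=
    (M.continuous_payoff μ i).comp continuous_snd
  have hbid (i : I) (j : J) : Continuous fun x : ℝ × (J → ℝ) => M.u i j (x.2 j + x.1) :=
    (M.cont i j).comp (by fun_prop)
  have hiff (x : ℝ × (J → ℝ)) : M.IsApproxEquilib r x.1 x.2 μ ↔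
      IsMatching μ ∧ r ≤ x.2 ∧ (∀ i, 0 ≤ M.payoff x.2 μ i) ∧
        (∀ j, (∀ i, μ i ≠ some j) → x.2 j = r j) ∧
        ∀ i j, M.u i j (x.2 j + x.1) ≤ M.payoff x.2 μ i :=
    ⟨fun ⟨⟨h₁, h₂, h₃, h₄⟩, h₅⟩ => ⟨h₁, h₂, h₃, h₄, h₅⟩,
      fun ⟨h₁, h₂, h₃, h₄, h₅⟩ => ⟨⟨h₁, h₂, h₃, h₄⟩, h₅⟩⟩
  simp only [hiff, ofPred_and, ofPred_forall]
  refine isClosed_const.inter <| (isClosed_le continuous_const continuous_snd).inter <|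
    (isClosed_iInter fun i => isClosed_le continuous_const (hpayoff i)).inter <|
    (isClosed_iInter fun j => isClosed_iInter fun _ =>
      isClosed_eq (by fun_prop) continuous_const).inter <|
    isClosed_iInter fun i => isClosed_iInter fun j => isClosed_le (hbid i j) (hpayoff i)

theorem exists_isReserveEquilib (M : Market I J) (r : J → ℝ) :
    ∃ p μ, M.IsReserveEquilib r p μ := by
  obtain ⟨B, hB⟩ := M.bddAbove_isFeasible r
  set K : Set (ℝ × (J → ℝ)) := ⋃ μ, Icc (0, r) (1, B) ∩ {x | M.IsApproxEquilib r x.1 x.2 μ}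
  have hK_compact : IsCompact K := isCompact_iUnion fun μ =>
    isCompact_Icc.inter_right (M.isClosed_setOf_isApproxEquilib r μ)
  have hK_pos : Ioc 0 1 ⊆ Prod.fst '' K := by
    intro δ hδ
    obtain ⟨p, μ, h⟩ := M.exists_isApproxEquilib r hδ.1
    have hmem : (δ, p) ∈ Icc (0, r) (1, B) :=
      ⟨⟨hδ.1.le, h.reserve_le⟩, hδ.2, hB ⟨μ, h.toIsFeasible⟩⟩
    exact ⟨(δ, p), mem_iUnion.2 ⟨μ, hmem, h⟩, rfl⟩
  have hzero : (0 : ℝ) ∈ Prod.fst '' K := by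
    refine closure_minimal hK_pos (hK_compact.image continuous_fst).isClosed ?_
    rw [closure_Ioc zero_ne_one]
    exact left_mem_Icc.2 zero_le_one
  obtain ⟨⟨_, p⟩, hp, rfl⟩ := hzero
  obtain ⟨μ, -, h⟩ := mem_iUnion.1 hp
  exact ⟨p, μ, h.toIsFeasible, fun i j => by simpa using h.le_payoff i j⟩

end Existence

section Meet

lemma IsReserveEquilib.payoff_le_of_le (h : M.IsReserveEquilib r p μ) (hpq : p ≤ q) (i : I) :
    M.payoff q ν i ≤ M.payoff p μ i := by
  rcases hi : ν i with _ | j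
  · exact (payoff_of_eq_none hi).trans_le (h.payoff_nonneg i)
  · rw [payoff_of_eq_some hi]
    exact ((M.anti i j).antitone (hpq j)).trans (h.le_payoff i j)

lemma IsReserveEquilib.exists_eq_some_of_payoff_lt (h : M.IsReserveEquilib r p μ)
    (hi : M.payoff p μ i < M.payoff q ν i) : ∃ j, q j < p j ∧ ν i = some j := by
  rcases hνi : ν i with _ | j
  · rw [payoff_of_eq_none hνi] at hi
    exact absurd hi (h.payoff_nonneg i).not_gt
  · rw [payoff_of_eq_some hνi] at hi
    exact ⟨j, (M.anti i j).lt_iff_gt.1 ((h.le_payoff i j).trans_lt hi), rfl⟩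

lemma IsFeasible.exists_eq_some_of_price_lt (h : M.IsFeasible r p μ)
    (h' : M.IsReserveEquilib r' q ν) (hr : r ≤ r') (hj : q j < p j) :
    ∃ i, M.payoff p μ i < M.payoff q ν i ∧ μ i = some j := by
  obtain ⟨i, hi⟩ : ∃ i, μ i = some j := by
    by_contra! hno
    exact (((hr j).trans (h'.reserve_le j)).trans_lt hj).ne' (h.price_eq_of_unsold j hno)
  refine ⟨i, ?_, hi⟩
  rw [payoff_of_eq_some hi]
  exact (M.anti i j hj).trans_le (h'.le_payoff i j)

lemma IsReserveEquilib.surjOn_and_mapsTo (h : M.IsReserveEquilib r p μ)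
    (h' : M.IsReserveEquilib r' q ν) (hr : r ≤ r') :
    SurjOn ν {i | M.payoff p μ i < M.payoff q ν i} (some '' {j | q j < p j}) ∧
      MapsTo μ {i | M.payoff p μ i < M.payoff q ν i} (some '' {j | q j < p j}) := by
  refine surjOn_and_mapsTo_of_injOn_of_surjOn (toFinite _) ?_ ?_ ?_
  · intro i hi
    obtain ⟨j, hj, hij⟩ := h.exists_eq_some_of_payoff_lt hi
    exact ⟨j, hj, hij.symm⟩
  · intro i hi i' _ hii'
    obtain ⟨j, -, hij⟩ := h.exists_eq_some_of_payoff_lt hi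
    exact h'.isMatching hij (hii' ▸ hij)
  · rintro _ ⟨j, hj, rfl⟩
    exact h.exists_eq_some_of_price_lt h' hr hj

/-- The matching of the meet of two outcomes: every buyer buys as in the outcome she prefers, and
as in the first one if she is indifferent. -/
noncomputable def meetMatching (M : Market I J) (p q : J → ℝ) (μ ν : I → Option J) :
    I → Option J :=
  fun i => if M.payoff p μ i < M.payoff q ν i then ν i else μ i

lemma meetMatching_of_lt (hi : M.payoff p μ i < M.payoff q ν i) :
    M.meetMatching p q μ ν i = ν i :=
  if_pos hi

lemma meetMatching_of_le (hi : M.payoff q ν i ≤ M.payoff p μ i) :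
    M.meetMatching p q μ ν i = μ i :=
  if_neg hi.not_gt

lemma IsReserveEquilib.price_lt_iff_payoff_lt (h : M.IsReserveEquilib r p μ)
    (h' : M.IsReserveEquilib r' q ν) (hr : r ≤ r') (hij : M.meetMatching p q μ ν i = some j) :
    q j < p j ↔ M.payoff p μ i < M.payoff q ν i := by
  rcases lt_or_ge (M.payoff p μ i) (M.payoff q ν i) with hi | hi
  · obtain ⟨k, hk, hik⟩ := h.exists_eq_some_of_payoff_lt hi
    rw [meetMatching_of_lt hi, hik, Option.some_inj] at hij
    exact iff_of_true (hij ▸ hk) hi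
  · rw [meetMatching_of_le hi] at hij
    refine iff_of_false (fun hj => ?_) hi.not_gt
    obtain ⟨k, hk, hkj⟩ := h.exists_eq_some_of_price_lt h' hr hj
    exact hi.not_gt (h.isMatching hkj hij ▸ hk)

lemma IsReserveEquilib.isMatching_meetMatching (h : M.IsReserveEquilib r p μ)
    (h' : M.IsReserveEquilib r' q ν) (hr : r ≤ r') : IsMatching (M.meetMatching p q μ ν) := by
  intro i i' j hi hi'
  have hlt := h.price_lt_iff_payoff_lt h' hr hi
  have hlt' := h.price_lt_iff_payoff_lt h' hr hi'
  by_cases hj : q j < p j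
  · rw [meetMatching_of_lt (hlt.1 hj)] at hi
    rw [meetMatching_of_lt (hlt'.1 hj)] at hi'
    exact h'.isMatching hi hi'
  · rw [meetMatching_of_le (not_lt.1 (hj ∘ hlt.2))] at hi
    rw [meetMatching_of_le (not_lt.1 (hj ∘ hlt'.2))] at hi'
    exact h.isMatching hi hi'

lemma IsReserveEquilib.payoff_inf_meetMatching (h : M.IsReserveEquilib r p μ)
    (h' : M.IsReserveEquilib r' q ν) (hr : r ≤ r') (i : I) :
    M.payoff (p ⊓ q) (M.meetMatching p q μ ν) i = M.payoff p μ i ⊔ M.payoff q ν i := by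
  rcases lt_or_ge (M.payoff p μ i) (M.payoff q ν i) with hi | hi
  · have hmeet := meetMatching_of_lt hi
    obtain ⟨j, hj, hij⟩ := h.exists_eq_some_of_payoff_lt hi
    rw [payoff_of_eq_some (hmeet.trans hij), Pi.inf_apply, inf_eq_right.2 hj.le,
      sup_eq_right.2 hi.le, payoff_of_eq_some hij]
  · have hmeet := meetMatching_of_le hi
    rw [sup_eq_left.2 hi]
    rcases hij : μ i with _ | j
    · rw [payoff_of_eq_none (hmeet.trans hij), payoff_of_eq_none hij]
    · have hj : p j ≤ q j := not_lt.1
        (hi.not_gt ∘ (h.price_lt_iff_payoff_lt h' hr (hmeet.trans hij)).1)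
      rw [payoff_of_eq_some (hmeet.trans hij), Pi.inf_apply, inf_eq_left.2 hj,
        payoff_of_eq_some hij]

theorem IsReserveEquilib.meet (h : M.IsReserveEquilib r p μ) (h' : M.IsReserveEquilib r' q ν)
    (hr : r ≤ r') : M.IsReserveEquilib r (p ⊓ q) (M.meetMatching p q μ ν) := by
  obtain ⟨hsurj, hmaps⟩ := h.surjOn_and_mapsTo h' hr
  refine ⟨⟨h.isMatching_meetMatching h' hr, le_inf h.reserve_le (hr.trans h'.reserve_le),
    fun i => ?_, fun j hj => ?_⟩, fun i j => ?_⟩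
  · rw [h.payoff_inf_meetMatching h' hr]
    exact le_sup_of_le_left (h.payoff_nonneg i)
  · have hpq : p j ≤ q j := by
      by_contra! hlt
      obtain ⟨i, hi, hij⟩ := hsurj ⟨j, hlt, rfl⟩
      exact hj i ((meetMatching_of_lt hi).trans hij)
    rw [Pi.inf_apply, inf_eq_left.2 hpq]
    refine h.price_eq_of_unsold j fun i hij => ?_
    rcases lt_or_ge (M.payoff p μ i) (M.payoff q ν i) with hi | hi
    · obtain ⟨k, hk, hik⟩ := hmaps hi
      obtain rfl : k = j := Option.some_inj.1 (hik.trans hij)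
      exact hpq.not_gt hk
    · exact hj i ((meetMatching_of_le hi).trans hij)
  · rw [h.payoff_inf_meetMatching h' hr, Pi.inf_apply, (M.anti i j).antitone.map_inf]
    exact sup_le_sup (h.le_payoff i j) (h'.le_payoff i j)

lemma _root_.IsLowest.payoff_le {w : I → ℝ} (h : IsLowest M p w μ) (hr : 0 ≤ r)
    (h' : M.IsReserveEquilib r q ν) (i : I) : M.payoff q ν i ≤ w i := by
  obtain ⟨hp, rfl⟩ := isEquilib_iff_isReserveEquilib_zero.1 h.1
  have hle : p ≤ p ⊓ q :=
    h.2 _ _ _ (isEquilib_iff_isReserveEquilib_zero.2 ⟨hp.meet h' hr, rfl⟩)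
  exact hp.payoff_le_of_le (hle.trans inf_le_right) i

end Meet

section RemoveBuyer

variable [DecidableEq I] {i0 : I} {κ : {i : I // i ≠ i0} → Option J} {s : J} {v : ℝ}

lemma IsReserveEquilib.removeBuyer (h : M.IsReserveEquilib r p μ) (hs : μ i0 = some s) :
    (M.removeBuyer i0).IsReserveEquilib (update r s (p s)) p fun i => μ i where
  isMatching _ _ _ hi hi' := Subtype.ext (h.isMatching hi hi')
  reserve_le := update_le_iff.2 ⟨le_rfl, fun j _ => h.reserve_le j⟩
  payoff_nonneg i := h.payoff_nonneg i
  price_eq_of_unsold j hj := by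
    rcases eq_or_ne j s with rfl | hjs
    · rw [update_self]
    · rw [update_of_ne hjs]
      refine h.price_eq_of_unsold j fun i hi => ?_
      refine hj ⟨i, ?_⟩ hi
      rintro rfl
      exact hjs (Option.some_inj.1 (hi.symm.trans hs))
  le_payoff i := h.le_payoff i

lemma IsReserveEquilib.payoff_le_inducedPayoff (h : M.IsReserveEquilib r p μ)
    (h' : (M.removeBuyer i0).IsReserveEquilib r q κ) :
    M.payoff p μ i0 ≤ inducedPayoff M q i0 := by
  obtain ⟨hnonneg, hle⟩ := inducedPayoff_le_iff.1 (le_refl (inducedPayoff M q i0))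
  rcases hs : μ i0 with _ | s
  · exact (payoff_of_eq_none hs).trans_le hnonneg
  have hr : r ≤ update r s (p s) := le_update_self_iff.2 (h.reserve_le s)
  have hqp : q s ≤ p s := by
    by_contra! hlt
    obtain ⟨i, -, hi⟩ := (h'.surjOn_and_mapsTo (h.removeBuyer hs) hr).1 ⟨s, hlt, rfl⟩
    exact i.2 (h.isMatching hi hs)
  rw [payoff_of_eq_some hs]
  exact ((M.anti i0 s).antitone hqp).trans (hle s)

lemma payoff_extendMatching_coe (i : {i : I // i ≠ i0}) :
    M.payoff p (extendMatching κ s) i = (M.removeBuyer i0).payoff p κ i := by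
  simp only [payoff, extendMatching_coe, Market.removeBuyer]

lemma IsReserveEquilib.addBuyer (h : (M.removeBuyer i0).IsReserveEquilib r q κ)
    (hs : ∀ i, κ i ≠ some s) (hnonneg : 0 ≤ M.u i0 s (q s))
    (hmax : ∀ j, M.u i0 j (q j) ≤ M.u i0 s (q s)) :
    M.IsReserveEquilib r q (extendMatching κ s) where
  isMatching := h.isMatching.extendMatching hs
  reserve_le := h.reserve_le
  payoff_nonneg i := by
    rcases eq_or_ne i i0 with rfl | hi
    · rwa [payoff_of_eq_some extendMatching_self]
    · exact (h.payoff_nonneg ⟨i, hi⟩).trans_eq (payoff_extendMatching_coe ⟨i, hi⟩).symm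
  price_eq_of_unsold j hj :=
    h.price_eq_of_unsold j fun i hi => hj i ((extendMatching_coe i).trans hi)
  le_payoff i j := by
    rcases eq_or_ne i i0 with rfl | hi
    · rw [payoff_of_eq_some extendMatching_self]
      exact hmax j
    · exact (h.le_payoff ⟨i, hi⟩ j).trans_eq (payoff_extendMatching_coe ⟨i, hi⟩).symm

lemma _root_.IsHighest.exists_isReserveEquilib_payoff_eq {wb : {i : I // i ≠ i0} → ℝ}
    (h : IsHighest (M.removeBuyer i0) p wb κ) (hv : 0 ≤ v) (hlt : v < inducedPayoff M p i0) :
    ∃ r q ν, 0 ≤ r ∧ M.IsReserveEquilib r q ν ∧ M.payoff q ν i0 = v := by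
  choose x hx using fun j => M.surj i0 j v
  obtain ⟨q, ν, hq⟩ := (M.removeBuyer i0).exists_isReserveEquilib (0 ⊔ x)
  have hq_nonneg : 0 ≤ q := le_sup_left.trans hq.reserve_le
  have hxq : x ≤ q := le_sup_right.trans hq.reserve_le
  obtain ⟨s, hs, hqs⟩ : ∃ s, (∀ i, ν i ≠ some s) ∧ q s = x s := by
    by_contra! hne
    have hzero : (M.removeBuyer i0).IsReserveEquilib 0 q ν := by
      refine ⟨⟨hq.isMatching, hq_nonneg, hq.payoff_nonneg, fun j hj => ?_⟩, hq.le_payoff⟩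
      exact (hq.price_eq_of_unsold j hj).trans <| (max_choice 0 (x j)).resolve_right fun hmax =>
        hne j hj ((hq.price_eq_of_unsold j hj).trans hmax)
    have hqp : q ≤ p := h.2 _ _ _ (isEquilib_iff_isReserveEquilib_zero.2 ⟨hzero, rfl⟩)
    refine hlt.not_ge (inducedPayoff_le_iff.2 ⟨hv, fun j => ?_⟩)
    exact ((M.anti i0 j).antitone ((hxq.trans hqp) j)).trans_eq (hx j)
  have hus : M.u i0 s (q s) = v := by rw [hqs, hx]
  refine ⟨0 ⊔ x, q, extendMatching ν s, le_sup_left, hq.addBuyer hs (hus ▸ hv) fun j => ?_, ?_⟩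
  · exact ((M.anti i0 j).antitone (hxq j)).trans_eq ((hx j).trans hus.symm)
  · rw [payoff_of_eq_some extendMatching_self, hus]

end RemoveBuyer

end Market

/-- Inductive characterization of the lowest-equilibrium payoff: the payoff of
buyer `i0` at the lowest equilibrium of `M` equals her best achievable payoff
at the prices of the highest equilibrium of `M` without buyer `i0`. -/
theorem lowest_payoff_inductive {I J : Type} [Fintype I] [Fintype J] [DecidableEq I]
    (M : Market I J) (i0 : I)
    (p : J → ℝ) (w : I → ℝ) (μ : I → Option J) (hlow : IsLowest M p w μ)
    (pb : J → ℝ) (wb : {i : I // i ≠ i0} → ℝ) (μb : {i : I // i ≠ i0} → Option J)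
    (hhigh : IsHighest (M.removeBuyer i0) pb wb μb) :
    w i0 = inducedPayoff M pb i0 := by
  obtain ⟨hp, rfl⟩ := Market.isEquilib_iff_isReserveEquilib_zero.1 hlow.1
  obtain ⟨hpb, -⟩ := Market.isEquilib_iff_isReserveEquilib_zero.1 hhigh.1
  refine le_antisymm (hp.payoff_le_inducedPayoff hpb)
    (le_of_forall_lt_imp_le_of_dense fun v hv => ?_)
  rcases lt_or_ge v 0 with hneg | hnonneg
  · exact hneg.le.trans (hp.payoff_nonneg i0)
  · obtain ⟨r, q, ν, hr, hq, rfl⟩ := hhigh.exists_isReserveEquilib_payoff_eq hnonneg hv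
    exact hlow.payoff_le hr hq i0
end
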